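/- arXiv:1805.03488 — 2 statements merged into one kernel-verified Lean document; each statement's English description precedes it below -/
import Mathlib

section
/- Let r ≥ 1 and d ≥ 1 be integers and let G be a finite simple graph such that every depth-(r−1) topological minor of G has edge density at most d. Then adm_r(G) ≤ 6rd³, i.e., G has a vertex ordering σ with adm_r(G,σ) ≤ 6rd³. -/
/-- `BConnGE G S u r m` holds if there is a family of `m` paths in `G`, each of length at
most `r`, starting in `u`, ending in a vertex of `S` different from `u`, with all internal
vertices outside `S`, and pairwise sharing only the vertex `u`. -/
def BConnGE {V : Type} (G : SimpleGraph V) (S : Set V) (u : V) (r m : ℕ) : Prop :=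
  ∃ (t : Fin m → V) (P : ∀ i, G.Walk u (t i)),
    (∀ i, (P i).IsPath) ∧
    (∀ i, (P i).length ≤ r) ∧
    (∀ i, t i ∈ S ∧ t i ≠ u) ∧
    (∀ i, ∀ w ∈ (P i).support, w ≠ u → w ≠ t i → w ∉ S) ∧
    (∀ i j, i ≠ j → ∀ w ∈ (P i).support, w ∈ (P j).support → w = u)

/-- The back-connectivity `bconn_r(S,u)`: the maximum cardinality of a family of paths as in
`BConnGE`. -/
noncomputable def bconn {V : Type} (G : SimpleGraph V) (S : Set V) (u : V) (r : ℕ) : ℕ :=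
  sSup {m : ℕ | BConnGE G S u r m}

/-- `G` admits a depth-`r` topological minor `H` (witnessed by a topological minor model:
branch vertices `f` and internally disjoint paths of length at most `2r+1` for the edges
of `H`, internally avoiding all branch vertices) whose edge density `|E(H)|/|V(H)|`
is strictly larger than `d`. -/
def HasDepthTopMinorDensityGT {V : Type} (G : SimpleGraph V) (r : ℕ) (d : ℝ) : Prop :=
  ∃ (m : ℕ) (H : SimpleGraph (Fin m)),
    0 < m ∧
    d < (H.edgeSet.ncard : ℝ) / (m : ℝ) ∧
    ∃ (f : Fin m → V) (P : ∀ (a b : Fin m), a < b → H.Adj a b → G.Walk (f a) (f b)),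
      Function.Injective f ∧
      (∀ (a b : Fin m) (hab : a < b) (h : H.Adj a b), (P a b hab h).IsPath) ∧
      (∀ (a b : Fin m) (hab : a < b) (h : H.Adj a b), (P a b hab h).length ≤ 2 * r + 1) ∧
      (∀ (a b : Fin m) (hab : a < b) (h : H.Adj a b),
        ∀ w ∈ (P a b hab h).support, w ≠ f a → w ≠ f b → ∀ c : Fin m, w ≠ f c) ∧
      (∀ (a b : Fin m) (hab : a < b) (h : H.Adj a b)
         (a' b' : Fin m) (hab' : a' < b') (h' : H.Adj a' b'), (a, b) ≠ (a', b') →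
        ∀ w ∈ (P a b hab h).support, w ∈ (P a' b' hab' h').support → w = f a ∨ w = f b)

/-- The `r`-admissibility `adm_r(G,σ)` of a vertex ordering `σ` (an injective map `V → ℕ`):
the maximum over vertices `v` of `bconn_r({u : σ u ≤ σ v}, v)`. -/
noncomputable def admOrd {V : Type} [Fintype V] (G : SimpleGraph V) (σ : V → ℕ) (r : ℕ) : ℕ :=
  Finset.univ.sup fun v => bconn G {u | σ u ≤ σ v} v r

/-!
If every vertex of some nonempty `S` had back-connectivity at least `l` into `S`, consider a maximal
family of internally disjoint paths of length at most `2r - 1`, with all internal vertices outside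
`S`, joining distinct pairs of vertices of `S`. It is a depth-`(r - 1)` topological minor model on
`S`, so it has at most `d |S|` paths, and `S` together with their internal vertices forms a set `X`
of size at most `(2(r - 1)d + 1) |S|`. By Turán's theorem some `R ⊆ S` with `|S| ≤ (2d + 1) |R|`
contains no pair joined by the family. Cut the `l` paths leaving each vertex of `R` at their first
vertex in `X`: two cut paths from different vertices of `R` that meet outside `X`, or join the same
pair, would yield a further path for the maximal family. Hence all `l |R|` cut paths together are
again a topological minor model, now on `X`, and `l |R| ≤ d |X|` gives
`l ≤ d (2d + 1) (2(r - 1)d + 1) ≤ 6rd³`. An ordering is then built from the back, placing last a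
vertex of small back-connectivity into the set of unplaced vertices.
-/

open Finset

section Ordering

theorem exists_injOn_forall_filter_le {V : Type*} {P : Finset V → V → Prop}
    (hP : ∀ S : Finset V, S.Nonempty → ∃ v ∈ S, P S v) (S : Finset V) :
    ∃ σ : V → ℕ, Set.InjOn σ S ∧ ∀ v ∈ S, P {u ∈ S | σ u ≤ σ v} v := by
  classical
  induction S using Finset.strongInduction with
  | H S ih =>
    obtain rfl | hS := S.eq_empty_or_nonempty
    · exact ⟨0, by simp, by simp⟩
    obtain ⟨v, hv, hPv⟩ := hP S hS
    obtain ⟨σ, hinj, hσ⟩ := ih (S.erase v) (erase_ssubset hv)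
    let τ := Function.update σ v ((S.erase v).sup σ + 1)
    have hτ_of_ne {u} (hu : u ≠ v) : τ u = σ u := Function.update_of_ne hu _ _
    have hτ_lt {u} (hu : u ∈ S) (huv : u ≠ v) : τ u < τ v := by
      rw [hτ_of_ne huv, show τ v = _ from Function.update_self ..]
      exact Nat.lt_succ_of_le (le_sup (mem_erase.2 ⟨huv, hu⟩))
    refine ⟨τ, ?_, fun w hw => ?_⟩
    · rw [← insert_erase hv, coe_insert, Set.injOn_insert (by simp)]
      refine ⟨hinj.congr fun u hu => (hτ_of_ne (ne_of_mem_erase hu)).symm, ?_⟩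
      rintro ⟨u, hu, huv⟩
      exact (hτ_lt (mem_of_mem_erase hu) (ne_of_mem_erase hu)).ne huv
    · obtain rfl | hwv := eq_or_ne w v
      · have hτ_le : ∀ u ∈ S, τ u ≤ τ w := fun u hu => by
          obtain rfl | huw := eq_or_ne u w
          exacts [le_rfl, (hτ_lt hu huw).le]
        rwa [filter_true_of_mem hτ_le]
      · have hfilter : {u ∈ S | τ u ≤ τ w} = {u ∈ S.erase v | σ u ≤ σ w} := by
          ext u
          obtain rfl | huv := eq_or_ne u v
          · simp [hτ_lt hw hwv]
          · simp [huv, hτ_of_ne huv, hτ_of_ne hwv]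
        rw [hfilter]
        exact hσ w (mem_erase.2 ⟨hwv, hw⟩)

end Ordering

section BackConnectivity

variable {V : Type} {G : SimpleGraph V} {S X : Set V} {u : V} {r m n : ℕ}

theorem BConnGE.mono_card (h : BConnGE G S u r m) (hnm : n ≤ m) : BConnGE G S u r n := by
  obtain ⟨t, P, hpath, hlen, hend, hint, hdisj⟩ := h
  exact ⟨_, fun i => P (Fin.castLE hnm i), fun _ => hpath _, fun _ => hlen _, fun _ => hend _,
    fun _ => hint _, fun i j hij => hdisj _ _ ((Fin.castLE_injective hnm).ne hij)⟩

theorem bconn_le_of_not_bConnGE (h : ¬ BConnGE G S u r (n + 1)) : bconn G S u r ≤ n :=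
  csSup_le' fun _ hm => Nat.lt_succ_iff.1 (lt_of_not_ge fun hle => h (hm.mono_card hle))

theorem exists_mem_support_takeUntil_forall_imp_eq {V : Type*} [DecidableEq V] {G : SimpleGraph V}
    {X : Set V} {u v : V} (p : G.Walk u v) (hv : v ∈ X) : ∃ x ∈ X, ∃ hx : x ∈ p.support,
      ∀ w ∈ (p.takeUntil x hx).support, w ∈ X → w = x := by
  classical
  obtain ⟨x, hxX, hx, hfirst⟩ := p.exists_mem_support_forall_mem_support_imp_eq
    {w ∈ p.support.toFinset | w ∈ X} ⟨v, by simp [hv]⟩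
  refine ⟨x, (mem_filter.1 hxX).2, hx, fun w hw hwX => hfirst w ?_ hw⟩
  simpa using ⟨p.support_takeUntil_subset_support hx hw, hwX⟩

theorem BConnGE.mono_set (h : BConnGE G S u r m) (hSX : S ⊆ X) : BConnGE G X u r m := by
  classical
  obtain ⟨t, P, hpath, hlen, hend, -, hdisj⟩ := h
  choose x hxX hx hfirst using fun i =>
    exists_mem_support_takeUntil_forall_imp_eq (X := X \ {u}) (P i) ⟨hSX (hend i).1, (hend i).2⟩
  refine ⟨x, fun i => (P i).takeUntil (x i) (hx i), fun i => (hpath i).takeUntil _,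
    fun i => ((P i).length_takeUntil_le_length _).trans (hlen i), hxX,
    fun i w hw hwu hwx hwX => hwx (hfirst i w hw ⟨hwX, hwu⟩), fun i j hij w hwi hwj => ?_⟩
  exact hdisj i j hij w ((P i).support_takeUntil_subset_support _ hwi)
    ((P j).support_takeUntil_subset_support _ hwj)

theorem exists_admOrd_le [Fintype V]
    (h : ∀ S : Finset V, S.Nonempty → ∃ v ∈ S, ¬ BConnGE G S v r (n + 1)) :
    ∃ σ : V → ℕ, Function.Injective σ ∧ admOrd G σ r ≤ n := by
  classical
  obtain ⟨σ, hinj, hσ⟩ := exists_injOn_forall_filter_le h univ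
  refine ⟨σ, by simpa using hinj, Finset.sup_le fun v _ => bconn_le_of_not_bConnGE ?_⟩
  simpa using hσ v (mem_univ v)

end BackConnectivity

section Turan

variable {α : Type*} [Fintype α] {H : SimpleGraph α} [DecidableRel H.Adj]

theorem two_mul_mul_card_edgeFinset_le_of_cliqueFree {r : ℕ} (h : H.CliqueFree (r + 1)) :
    2 * r * #H.edgeFinset ≤ (r - 1) * Fintype.card α ^ 2 :=
  (Nat.mul_le_mul_left _ (h.card_edgeFinset_le.trans_eq
    SimpleGraph.card_edgeFinset_turanGraph.symm)).trans
    SimpleGraph.mul_card_edgeFinset_turanGraph_le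

theorem card_edgeFinset_add_card_edgeFinset_compl [DecidableEq α] :
    #H.edgeFinset + #Hᶜ.edgeFinset = (Fintype.card α).choose 2 := by
  rw [← card_union_of_disjoint (SimpleGraph.disjoint_edgeFinset.2 disjoint_compl_right),
    ← SimpleGraph.edgeFinset_sup, ← SimpleGraph.card_edgeFinset_top_eq_card_choose_two]
  congr!
  exact sup_compl_eq_top

variable (H) in
theorem card_sq_le_mul_indepNum :
    Fintype.card α ^ 2 ≤ (2 * #H.edgeFinset + Fintype.card α) * H.indepNum := by
  classical
  cases isEmpty_or_nonempty α with
  | inl hα => simp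
  | inr hα =>
    have hpos : 1 ≤ H.indepNum := by
      simpa using SimpleGraph.IsIndepSet.card_le_indepNum (G := H) (t := {hα.some}) (by simp)
    have hfree : Hᶜ.CliqueFree (H.indepNum + 1) := (SimpleGraph.cliqueFree_compl H).2 fun t ht => by
      have := ht.isIndepSet.card_le_indepNum
      have := ht.card_eq
      lia
    have hturan := two_mul_mul_card_edgeFinset_le_of_cliqueFree hfree
    have hsq : Fintype.card α ^ 2 = 2 * #H.edgeFinset + Fintype.card α + 2 * #Hᶜ.edgeFinset := by
      rw [add_right_comm, ← mul_add, card_edgeFinset_add_card_edgeFinset_compl,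
        Nat.choose_two_right, Nat.mul_div_cancel' (Nat.even_mul_pred_self _).two_dvd,
        Nat.mul_sub_one, sq, Nat.sub_add_cancel (Nat.le_mul_self _)]
    refine le_of_add_le_add_right (a := (H.indepNum - 1) * Fintype.card α ^ 2) ?_
    calc Fintype.card α ^ 2 + (H.indepNum - 1) * Fintype.card α ^ 2
        = H.indepNum * Fintype.card α ^ 2 := by
          rw [← one_add_mul, Nat.add_sub_cancel' hpos]
      _ = (2 * #H.edgeFinset + Fintype.card α) * H.indepNum +
          2 * H.indepNum * #Hᶜ.edgeFinset := by rw [hsq]; ring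
      _ ≤ _ := Nat.add_le_add_left hturan _

end Turan

section Links

variable {V : Type*} [DecidableEq V] {G : SimpleGraph V} {a b w : V}

/-- The internal vertices of a walk, i.e. its vertices other than the two endpoints. -/
def walkInterior (p : G.Walk a b) : Finset V := p.support.toFinset \ {a, b}

theorem mem_walkInterior {p : G.Walk a b} :
    w ∈ walkInterior p ↔ w ∈ p.support ∧ w ≠ a ∧ w ≠ b := by
  simp [walkInterior]

theorem walkInterior_reverse (p : G.Walk a b) : walkInterior p.reverse = walkInterior p := by
  ext w
  simp only [mem_walkInterior, SimpleGraph.Walk.support_reverse, List.mem_reverse]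
  tauto

theorem walkInterior_bypass_subset (p : G.Walk a b) : walkInterior p.bypass ⊆ walkInterior p :=
  fun _ hw => mem_walkInterior.2
    ((mem_walkInterior.1 hw).imp_left (p.support_bypass_subset_support ·))

theorem card_walkInterior_lt_length (p : G.Walk a b) (hab : a ≠ b) :
    #(walkInterior p) < p.length := by
  have hends : ({a, b} : Finset V) ⊆ p.support.toFinset := by simp [insert_subset_iff]
  have hsupport := p.support.toFinset_card_le
  have hcard := card_sdiff_add_card_eq_card hends
  rw [card_pair hab] at hcard
  rw [p.length_support] at hsupport
  rw [walkInterior]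
  lia

theorem exists_walk_of_mem_walkInterior {p : G.Walk a b} (hp : p.IsPath)
    (hw : w ∈ walkInterior p) :
    ∃ q : G.Walk a w, q.length < p.length ∧ ∀ x ∈ q.support, x = a ∨ x ∈ walkInterior p := by
  obtain ⟨hwp, -, hwb⟩ := mem_walkInterior.1 hw
  refine ⟨p.takeUntil w hwp, SimpleGraph.Walk.length_takeUntil_lt_length hwp hwb,
    fun x hx => or_iff_not_imp_left.2 fun hxa =>
      mem_walkInterior.2 ⟨p.support_takeUntil_subset_support hwp hx, hxa, ?_⟩⟩
  rintro rfl
  exact SimpleGraph.Walk.endpoint_notMem_support_takeUntil hp hwp hwb.symm hx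

theorem exists_walk_of_mem_walkInterior_inter {a' b' : V} {p : G.Walk a b} {p' : G.Walk a' b'}
    (hp : p.IsPath) (hp' : p'.IsPath) (hw : w ∈ walkInterior p ∩ walkInterior p') :
    ∃ q : G.Walk a a', q.length + 2 ≤ p.length + p'.length ∧
      walkInterior q ⊆ walkInterior p ∪ walkInterior p' := by
  obtain ⟨hwp, hwp'⟩ := mem_inter.1 hw
  obtain ⟨q, hlen, hq⟩ := exists_walk_of_mem_walkInterior hp hwp
  obtain ⟨q', hlen', hq'⟩ := exists_walk_of_mem_walkInterior hp' hwp'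
  refine ⟨q.append q'.reverse, ?_, fun x hx => ?_⟩
  · rw [SimpleGraph.Walk.length_append, SimpleGraph.Walk.length_reverse]
    lia
  · obtain ⟨hx, hxa, hxa'⟩ := mem_walkInterior.1 hx
    rw [SimpleGraph.Walk.mem_support_append_iff, SimpleGraph.Walk.support_reverse,
      List.mem_reverse] at hx
    exact mem_union.2 (hx.imp (fun h => (hq x h).resolve_left hxa)
      fun h => (hq' x h).resolve_left hxa')

/-- The relation on vertices of being joined by a walk of length at most `k` that has no internal
vertex in `B`. -/
def JoinedOutside (G : SimpleGraph V) (k : ℕ) (B : Finset V) (a b : V) : Prop :=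
  ∃ p : G.Walk a b, p.length ≤ k ∧ Disjoint (walkInterior p) B

/-- A link of `B` is the trace of a walk of length at most `k` between two distinct vertices of
`B` that avoids `B` internally. It only records the unordered pair of endpoints and the set of
internal vertices, so that links, unlike walks, form a type without dependencies. -/
inductive IsLink (G : SimpleGraph V) (k : ℕ) (B : Finset V) : Sym2 V × Finset V → Prop
  | mk {a b : V} (p : G.Walk a b) (ha : a ∈ B) (hb : b ∈ B) (hab : a ≠ b) (hlen : p.length ≤ k)
      (hB : Disjoint (walkInterior p) B) : IsLink G k B (s(a, b), walkInterior p)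

/-- Two links are separated if they join different pairs of vertices and are internally disjoint:
the condition on two edges of a topological minor model. -/
def Separated (ℓ ℓ' : Sym2 V × Finset V) : Prop := ℓ.1 ≠ ℓ'.1 ∧ Disjoint ℓ.2 ℓ'.2

/-- A family of pairwise separated links of `B`: a topological minor model with set of branch
vertices `B` whose edges are modelled by walks of length at most `k`. -/
structure IsLinkFamily (G : SimpleGraph V) (k : ℕ) (B : Finset V)
    (L : Finset (Sym2 V × Finset V)) : Prop where
  isLink : ∀ ℓ ∈ L, IsLink G k B ℓ
  pairwise : (L : Set (Sym2 V × Finset V)).Pairwise Separated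

/-- The graph modelled by a family of links, as a graph on all of `V`: the vertices that are not
branch vertices are isolated. -/
def linkGraph (L : Finset (Sym2 V × Finset V)) : SimpleGraph V :=
  .fromEdgeSet (L.image Prod.fst)

variable {k : ℕ} {B : Finset V} {L : Finset (Sym2 V × Finset V)} {ℓ : Sym2 V × Finset V}

instance : Std.Symm (Separated (V := V)) := ⟨fun _ _ h => ⟨h.1.symm, h.2.symm⟩⟩

theorem IsLink.not_isDiag (h : IsLink G k B ℓ) : ¬ ℓ.1.IsDiag := by
  obtain ⟨p, -, -, hab, -, -⟩ := h
  simpa using hab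

theorem IsLink.mem_of_mem_fst (h : IsLink G k B ℓ) (ha : a ∈ ℓ.1) : a ∈ B := by
  obtain ⟨p, hb, hc, -, -, -⟩ := h
  obtain rfl | rfl := Sym2.mem_iff.1 ha
  exacts [hb, hc]

theorem IsLink.disjoint_snd (h : IsLink G k B ℓ) : Disjoint ℓ.2 B := by
  obtain ⟨p, -, -, -, -, hB⟩ := h
  exact hB

theorem IsLink.card_snd_lt (h : IsLink G k B ℓ) : #ℓ.2 < k := by
  obtain ⟨p, -, -, hab, hlen, -⟩ := h
  exact (card_walkInterior_lt_length p hab).trans_le hlen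

theorem IsLink.exists_path (h : IsLink G k B ℓ) (hab : ℓ.1 = s(a, b)) :
    ∃ p : G.Walk a b, p.IsPath ∧ p.length ≤ k ∧ walkInterior p ⊆ ℓ.2 := by
  obtain ⟨p, -, -, -, hlen, -⟩ := h
  obtain ⟨rfl, rfl⟩ | ⟨rfl, rfl⟩ := Sym2.eq_iff.1 hab
  · exact ⟨p.bypass, p.bypass_isPath, p.length_bypass_le_length.trans hlen,
      walkInterior_bypass_subset p⟩
  · exact ⟨p.reverse.bypass, p.reverse.bypass_isPath,
      p.reverse.length_bypass_le_length.trans (p.length_reverse.trans_le hlen),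
      (walkInterior_bypass_subset _).trans (walkInterior_reverse p).subset⟩

theorem IsLinkFamily.eq_empty (hL : IsLinkFamily G k B L) (hB : B = ∅) : L = ∅ :=
  eq_empty_of_forall_notMem fun ℓ hℓ => by
    obtain ⟨p, ha, -, -, -, -⟩ := hL.isLink ℓ hℓ
    simp [hB] at ha

theorem IsLinkFamily.adj_linkGraph (hL : IsLinkFamily G k B L) :
    (linkGraph L).Adj a b ↔ ∃ ℓ ∈ L, ℓ.1 = s(a, b) := by
  rw [linkGraph, SimpleGraph.fromEdgeSet_adj, mem_coe, mem_image, and_iff_left_iff_imp]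
  rintro ⟨ℓ, hℓ, hab⟩ rfl
  exact (hL.isLink ℓ hℓ).not_isDiag (by simp [hab])

theorem IsLinkFamily.injOn_fst (hL : IsLinkFamily G k B L) :
    Set.InjOn Prod.fst (L : Set (Sym2 V × Finset V)) := fun _ hℓ _ hℓ' h =>
  hL.pairwise.eq hℓ hℓ' fun hsep => hsep.1 h

theorem IsLinkFamily.edgeSet_linkGraph (hL : IsLinkFamily G k B L) :
    (linkGraph L).edgeSet = L.image Prod.fst := by
  ext e
  induction e with
  | h a b => simp [hL.adj_linkGraph]

theorem IsLinkFamily.ncard_edgeSet_induce_linkGraph (hL : IsLinkFamily G k B L) :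
    ((linkGraph L).induce (B : Set V)).edgeSet.ncard = #L := by
  have hB {a b} (hab : (linkGraph L).Adj a b) : a ∈ B := by
    obtain ⟨ℓ, hℓ, hℓab⟩ := hL.adj_linkGraph.1 hab
    exact (hL.isLink ℓ hℓ).mem_of_mem_fst (by simp [hℓab])
  have himage : Sym2.map Subtype.val '' ((linkGraph L).induce (B : Set V)).edgeSet =
      (linkGraph L).edgeSet := by
    ext e
    constructor
    · rintro ⟨e, he, rfl⟩
      induction e with
      | h a b => exact he
    · induction e with
      | h a b => exact fun hab => ⟨s(⟨a, hB hab⟩, ⟨b, hB hab.symm⟩), hab, rfl⟩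
  rw [← Set.ncard_image_of_injective _ (Sym2.map.injective Subtype.val_injective), himage,
    hL.edgeSet_linkGraph, Set.ncard_coe_finset, card_image_of_injOn hL.injOn_fst]

theorem IsLinkFamily.exists_isIndepSet_linkGraph (hL : IsLinkFamily G k B L) :
    ∃ R ⊆ B, (linkGraph L).IsIndepSet R ∧ #B ^ 2 ≤ (2 * #L + #B) * #R := by
  classical
  have hturan := card_sq_le_mul_indepNum ((linkGraph L).induce (B : Set V))
  rw [← Set.ncard_coe_finset, SimpleGraph.coe_edgeFinset, hL.ncard_edgeSet_induce_linkGraph]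
    at hturan
  obtain ⟨R, hR⟩ := ((linkGraph L).induce (B : Set V)).exists_isNIndepSet_indepNum
  refine ⟨R.map (.subtype _), ?_, ?_, ?_⟩
  · intro v hv
    obtain ⟨v, -, rfl⟩ := mem_map.1 hv
    exact v.2
  · rw [coe_map]
    exact (Subtype.val_injective.injOn.pairwise_image).2 hR.isIndepSet
  · simpa [hR.card_eq] using hturan

theorem IsLinkFamily.exists_path_of_adj (hL : IsLinkFamily G k B L) (h : (linkGraph L).Adj a b) :
    ∃ ℓ ∈ L, ℓ.1 = s(a, b) ∧
      ∃ p : G.Walk a b, p.IsPath ∧ p.length ≤ k ∧ walkInterior p ⊆ ℓ.2 := by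
  obtain ⟨ℓ, hℓ, hab⟩ := hL.adj_linkGraph.1 h
  exact ⟨ℓ, hℓ, hab, (hL.isLink ℓ hℓ).exists_path hab⟩

theorem IsLinkFamily.insert (hL : IsLinkFamily G k B L) (hℓ : IsLink G k B ℓ)
    (hsep : ∀ ℓ' ∈ L, Separated ℓ ℓ') : IsLinkFamily G k B (insert ℓ L) where
  isLink := (forall_mem_insert _ _ _).2 ⟨hℓ, hL.isLink⟩
  pairwise := by
    rw [coe_insert, Set.pairwise_insert_of_symm]
    exact ⟨hL.pairwise, fun ℓ' hℓ' _ => hsep ℓ' hℓ'⟩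

theorem adj_linkGraph_of_maximal (hL : Maximal (IsLinkFamily G k B) L) (ha : a ∈ B) (hb : b ∈ B)
    (hab : a ≠ b) (h : JoinedOutside G k (B ∪ L.biUnion Prod.snd) a b) :
    (linkGraph L).Adj a b := by
  obtain ⟨p, hlen, hp⟩ := h
  rw [disjoint_union_right, disjoint_biUnion_right] at hp
  by_contra hnadj
  have hends : ∀ ℓ ∈ L, s(a, b) ≠ ℓ.1 := fun ℓ hℓ h =>
    hnadj (hL.prop.adj_linkGraph.2 ⟨ℓ, hℓ, h.symm⟩)
  have hinsert : IsLinkFamily G k B (insert (s(a, b), walkInterior p) L) :=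
    hL.prop.insert (.mk p ha hb hab hlen hp.1) fun ℓ hℓ => ⟨hends ℓ hℓ, hp.2 ℓ hℓ⟩
  exact hends _ (hL.le_of_ge hinsert (subset_insert _ _) (mem_insert_self _ _)) rfl

theorem isLinkFamily_image {ι : Type*} [Fintype ι] {f : ι → Sym2 V × Finset V}
    (hf : ∀ i, IsLink G k B (f i)) (hsep : Pairwise fun i j => Separated (f i) (f j)) :
    IsLinkFamily G k B (univ.image f) where
  isLink := by simpa using hf
  pairwise := by
    rw [coe_image, coe_univ, Set.image_univ]
    exact hsep.range_pairwise

theorem separated_of_forall_mem_support {u s t : V} {p : G.Walk u s} {q : G.Walk u t} (hs : s ≠ u)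
    (h : ∀ w ∈ p.support, w ∈ q.support → w = u) :
    Separated (s(u, s), walkInterior p) (s(u, t), walkInterior q) := by
  refine ⟨fun hst => ?_, disjoint_left.2 fun w hw hw' => ?_⟩
  · obtain rfl : s = t := Sym2.congr_right.1 hst
    exact hs (h s p.end_mem_support q.end_mem_support)
  · rw [mem_walkInterior] at hw hw'
    exact hw.2.1 (h w hw.1 hw'.1)

theorem separated_of_not_joinedOutside {r : ℕ} {u v s t : V} {p : G.Walk u s} {q : G.Walk v t}
    (hp : p.IsPath) (hq : q.IsPath) (hplen : p.length ≤ r + 1) (hqlen : q.length ≤ r + 1)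
    (hpB : Disjoint (walkInterior p) B) (hqB : Disjoint (walkInterior q) B)
    (h : ¬ JoinedOutside G (2 * r + 1) B u v) :
    Separated (s(u, s), walkInterior p) (s(v, t), walkInterior q) := by
  refine ⟨fun hst => h ?_, disjoint_left.2 fun w hw hw' => h ?_⟩
  · obtain ⟨rfl, -⟩ | ⟨-, rfl⟩ := Sym2.eq_iff.1 hst
    · exact ⟨.nil, by simp, by simp [walkInterior]⟩
    · exact ⟨p, by lia, hpB⟩
  · obtain ⟨q', hlen, hq'⟩ := exists_walk_of_mem_walkInterior_inter hp hq (mem_inter.2 ⟨hw, hw'⟩)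
    exact ⟨q', by lia, (disjoint_union_left.2 ⟨hpB, hqB⟩).mono_left hq'⟩

end Links

section Density

variable {V : Type} {G : SimpleGraph V} {r l : ℕ} {d : ℝ}
  {B R S : Finset V} {L : Finset (Sym2 V × Finset V)}

theorem eq_of_sym2Mk_eq_of_lt {α : Type*} [LinearOrder α] {x y x' y' : α} (hxy : x < y)
    (hxy' : x' < y') (h : s(x, y) = s(x', y')) : (x, y) = (x', y') := by
  obtain ⟨rfl, rfl⟩ | ⟨rfl, rfl⟩ := Sym2.eq_iff.1 h
  exacts [rfl, (hxy.asymm hxy').elim]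

theorem hasDepthTopMinorDensityGT_of_isLinkFamily [DecidableEq V]
    (hL : IsLinkFamily G (2 * r + 1) B L) (hd : d * #B < #L) :
    HasDepthTopMinorDensityGT G r d := by
  have hB : 0 < #B := by
    by_contra! hB
    have hL0 : L = ∅ := hL.eq_empty (card_eq_zero.1 (Nat.le_zero.1 hB))
    simp [Nat.le_zero.1 hB, hL0] at hd
  let f : Fin #B → V := fun x => B.equivFin.symm x
  have hf : Function.Injective f := Subtype.val_injective.comp B.equivFin.symm.injective
  have hfB (x : Fin #B) : f x ∈ B := (B.equivFin.symm x).2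
  let H : SimpleGraph (Fin #B) := (linkGraph L).comap f
  have hcard : H.edgeSet.ncard = #L := by
    rw [← hL.ncard_edgeSet_induce_linkGraph]
    exact Nat.card_congr
      (SimpleGraph.Iso.comap B.equivFin.symm ((linkGraph L).induce (B : Set V))).mapEdgeSet
  choose ℓ hℓ hends P hpath hlen hint using fun x y (h : H.Adj x y) => hL.exists_path_of_adj h
  have hdisjB {x y} (h : H.Adj x y) {w} (hw : w ∈ walkInterior (P x y h)) : w ∉ B :=
    disjoint_left.1 (hL.isLink _ (hℓ x y h)).disjoint_snd (hint x y h hw)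
  refine ⟨#B, H, hB, ?_, f, fun x y _ h => P x y h, hf, fun x y _ h => hpath x y h,
    fun x y _ h => hlen x y h, fun x y _ h w hw hwx hwy z hwz => ?_,
    fun x y hxy h x' y' hxy' h' hne w hw hw' => ?_⟩
  · rwa [lt_div_iff₀ (by exact_mod_cast hB), hcard]
  · exact hdisjB h (mem_walkInterior.2 ⟨hw, hwx, hwy⟩) (hwz ▸ hfB z)
  · by_contra! hwxy
    have hwint : w ∈ walkInterior (P x y h) := mem_walkInterior.2 ⟨hw, hwxy⟩
    have hwB := hdisjB h hwint
    have hwint' : w ∈ walkInterior (P x' y' h') := mem_walkInterior.2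
      ⟨hw', fun hwx' => hwB (hwx' ▸ hfB x'), fun hwy' => hwB (hwy' ▸ hfB y')⟩
    have hℓ_eq : ℓ x y h = ℓ x' y' h' := hL.pairwise.eq (hℓ x y h) (hℓ x' y' h') fun hsep =>
      disjoint_left.1 hsep.2 (hint x y h hwint) (hint x' y' h' hwint')
    have hxy_eq : s(x, y) = s(x', y') := Sym2.map.injective hf <| by
      simp only [Sym2.map_mk, ← hends x y h, hℓ_eq, hends]
    exact hne (eq_of_sym2Mk_eq_of_lt hxy hxy' hxy_eq)

theorem exists_isLinkFamily_card_eq [DecidableEq V] (hRB : R ⊆ B)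
    (hR : (R : Set V).Pairwise fun u v => ¬ JoinedOutside G (2 * r + 1) B u v)
    (hconn : ∀ v ∈ R, BConnGE G (B : Set V) v (r + 1) l) :
    ∃ L, IsLinkFamily G (2 * r + 1) B L ∧ #L = #R * l := by
  choose t P hpath hlen hend hint hdisj using fun v : R => hconn v v.2
  let f (x : R × Fin l) : Sym2 V × Finset V := (s(↑x.1, t x.1 x.2), walkInterior (P x.1 x.2))
  have hintB (v : R) (i : Fin l) : Disjoint (walkInterior (P v i)) B :=
    disjoint_left.2 fun w hw => by
      obtain ⟨hw, hwv, hwt⟩ := mem_walkInterior.1 hw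
      exact hint v i w hw hwv hwt
  have hlink (x : R × Fin l) : IsLink G (2 * r + 1) B (f x) :=
    .mk _ (hRB x.1.2) (hend x.1 x.2).1 (hend x.1 x.2).2.symm ((hlen x.1 x.2).trans (by lia))
      (hintB x.1 x.2)
  have hsep : Pairwise fun x y => Separated (f x) (f y) := by
    rintro ⟨u, i⟩ ⟨v, j⟩ hne
    obtain rfl | huv := eq_or_ne u v
    · exact separated_of_forall_mem_support (hend u i).2
        (hdisj u i j fun hij => hne (by rw [hij]))
    · exact separated_of_not_joinedOutside (hpath u i) (hpath v j) (hlen u i) (hlen v j)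
        (hintB u i) (hintB v j) (hR u.2 v.2 (Subtype.coe_ne_coe.2 huv))
  have hinj : Function.Injective f := Function.injective_iff_pairwise_ne.2 <|
    hsep.mono fun _ _ h hxy => h.1 (congrArg Prod.fst hxy)
  exact ⟨univ.image f, isLinkFamily_image hlink hsep, by simp [card_image_of_injective _ hinj]⟩

theorem le_of_forall_bConnGE [Finite V] (hG : ¬ HasDepthTopMinorDensityGT G r d) (hS : S.Nonempty)
    (hconn : ∀ v ∈ S, BConnGE G (S : Set V) v (r + 1) l) :
    (l : ℝ) ≤ d * (2 * d + 1) * (2 * r * d + 1) := by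
  classical
  have hdensity {B L} (hL : IsLinkFamily G (2 * r + 1) B L) : (#L : ℝ) ≤ d * #B :=
    le_of_not_gt fun h => hG (hasDepthTopMinorDensityGT_of_isLinkFamily hL h)
  obtain ⟨L, hL⟩ := (Set.toFinite {L | IsLinkFamily G (2 * r + 1) S L}).exists_maximal
    ⟨∅, by simp, by simp⟩
  replace hL : Maximal (IsLinkFamily G (2 * r + 1) S) L := hL
  obtain ⟨R, hRS, hRindep, hRcard⟩ := hL.prop.exists_isIndepSet_linkGraph
  let X := S ∪ L.biUnion Prod.snd
  have hSX : S ⊆ X := subset_union_left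
  obtain ⟨L', hL', hL'card⟩ := exists_isLinkFamily_card_eq (hRS.trans hSX)
    (fun u hu v hv huv h =>
      hRindep hu hv huv (adj_linkGraph_of_maximal hL (hRS hu) (hRS hv) huv h))
    fun v hv => (hconn v (hRS hv)).mono_set (coe_subset.2 hSX)
  have hXcard : #X ≤ #S + #L * (2 * r) := (card_union_le _ _).trans <|
    Nat.add_le_add_left (card_biUnion_le_card_mul _ _ _ fun ℓ hℓ =>
      Nat.lt_succ_iff.1 (hL.prop.isLink ℓ hℓ).card_snd_lt) _
  have hS0 : (0 : ℝ) < #S := by exact_mod_cast hS.card_pos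
  have hd0 : 0 ≤ d := nonneg_of_mul_nonneg_left ((Nat.cast_nonneg _).trans (hdensity hL.prop)) hS0
  have hS_le : (#S : ℝ) ≤ (2 * d + 1) * #R := by
    refine le_of_mul_le_mul_right ?_ hS0
    calc (#S : ℝ) * #S = #S ^ 2 := by ring
      _ ≤ (2 * #L + #S) * #R := by exact_mod_cast hRcard
      _ ≤ (2 * (d * #S) + #S) * #R := by gcongr; exact hdensity hL.prop
      _ = (2 * d + 1) * #R * #S := by ring
  have hX_le : (#X : ℝ) ≤ (2 * r * d + 1) * #S := by
    calc (#X : ℝ) ≤ #S + #L * (2 * r) := by exact_mod_cast hXcard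
      _ ≤ #S + d * #S * (2 * r) := by gcongr; exact hdensity hL.prop
      _ = (2 * r * d + 1) * #S := by ring
  have hR0 : (0 : ℝ) < #R := pos_of_mul_pos_right (hS0.trans_le hS_le) (by positivity)
  refine le_of_mul_le_mul_left ?_ hR0
  calc (#R : ℝ) * l = #L' := by exact_mod_cast hL'card.symm
    _ ≤ d * #X := hdensity hL'
    _ ≤ d * ((2 * r * d + 1) * ((2 * d + 1) * #R)) := by gcongr; exact hX_le.trans (by gcongr)
    _ = #R * (d * (2 * d + 1) * (2 * r * d + 1)) := by ring

end Density

theorem stmt4_general {V : Type} [Fintype V] (G : SimpleGraph V) (r : ℕ) (d : ℝ) (hr : 1 ≤ r)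
    (hd : 1 ≤ d) (hminor : ¬ HasDepthTopMinorDensityGT G (r - 1) d) :
    ∃ σ : V → ℕ, Function.Injective σ ∧ (admOrd G σ r : ℝ) ≤ 6 * r * d ^ 3 := by
  classical
  obtain ⟨r, rfl⟩ := Nat.exists_eq_add_of_le' hr
  have hbound : d * (2 * d + 1) * (2 * r * d + 1) ≤ 6 * (r + 1 : ℕ) * d ^ 3 := by
    calc d * (2 * d + 1) * (2 * r * d + 1) ≤ d * (2 * d + d) * (2 * r * d + 2 * d) := by
          gcongr; linarith
      _ = 6 * (r + 1 : ℕ) * d ^ 3 := by push_cast; ring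
  obtain ⟨σ, hσ, hadm⟩ := exists_admOrd_le (G := G) (r := r + 1)
    (n := ⌊6 * (r + 1 : ℕ) * d ^ 3⌋₊) fun S hS => by
      by_contra! hconn
      have hle := (le_of_forall_bConnGE hminor hS hconn).trans hbound
      push_cast at hle
      exact (Nat.lt_floor_add_one _).not_ge hle
  exact ⟨σ, hσ, (Nat.le_floor_iff (by positivity)).1 hadm⟩

/-- If every depth-`(r−1)` topological minor of `G` has edge density at most `d`
(`r, d ≥ 1`), then `G` has a vertex ordering `σ` with `adm_r(G,σ) ≤ 6rd³`. -/
theorem stmt4 {V : Type} [Fintype V] (G : SimpleGraph V) (r d : ℕ) (hr : 1 ≤ r) (hd : 1 ≤ d)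
    (hminor : ¬ HasDepthTopMinorDensityGT G (r - 1) (d : ℝ)) :
    ∃ σ : V → ℕ, Function.Injective σ ∧ admOrd G σ r ≤ 6 * r * d ^ 3 := by
  exact_mod_cast stmt4_general G r d hr (by exact_mod_cast hd) hminor
end

section
/- Let r ≥ 2 and d ≥ 1 be integers and let G be a finite simple graph on n ≥ 1 vertices such that every depth-(r−1) topological minor of G has edge density at most d. Then G admits a block vertex ordering of r-admissibility at most 6r²d³ and length at most ⌊log₂ n⌋ + 1. -/
/-! In every vertex set `S`, at least half of the vertices have small back-connectivity; they can
form the last block of an ordering of `S`, so that `⌊log₂ n⌋ + 1` blocks suffice.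

For if `T ⊆ S` were a set of more than `#S / 2` vertices of large back-connectivity, take a maximal
family of disjoint short connections between pairs of vertices of `S`. It is a topological minor on
`S`, hence sparse: it has an independent set `R ⊆ T` of size proportional to `#S`, and `S` together
with the interiors of the connections is a set `W` of size proportional to `#S`. By maximality,
short paths from distinct vertices of `R` cannot meet outside `W`, so the paths witnessing the
back-connectivities in `W` of the vertices of `R` form a topological minor on `W` with too many
edges. -/

open Finset SimpleGraph

section IndependentSets

variable {V : Type*} {H : SimpleGraph V} {d : ℝ}

theorem exists_card_filter_adj_le [DecidableRel H.Adj] {T : Finset V} (hT : T.Nonempty)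
    (hedges : ((H.induce (T : Set V)).edgeSet.ncard : ℝ) ≤ d * #T) :
    ∃ v ∈ T, (#{w ∈ T | H.Adj v w} : ℝ) ≤ 2 * d := by
  classical
  have degree_eq (v : (T : Set V)) : (H.induce (T : Set V)).degree v = #{w ∈ T | H.Adj v w} := by
    rw [← card_neighborFinset_eq_degree, ← card_map (.subtype (· ∈ (T : Set V)))]
    congr 1
    ext w
    simp [and_comm]
  have sum_le : ∑ v ∈ T, (#{w ∈ T | H.Adj v w} : ℝ) ≤ ∑ v ∈ T, 2 * d := by
    have handshake := (H.induce (T : Set V)).sum_degrees_eq_twice_card_edges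
    rw [edgeFinset, ← Set.ncard_eq_toFinset_card'] at handshake
    simp only [degree_eq] at handshake
    have sum_eq : ∑ v ∈ T, #{w ∈ T | H.Adj v w} = 2 * (H.induce (T : Set V)).edgeSet.ncard :=
      (sum_coe_sort T fun v ↦ #{w ∈ T | H.Adj v w}).symm.trans handshake
    calc ∑ v ∈ T, (#{w ∈ T | H.Adj v w} : ℝ)
        = 2 * (H.induce (T : Set V)).edgeSet.ncard := mod_cast sum_eq
      _ ≤ 2 * (d * #T) := by gcongr
      _ = ∑ v ∈ T, 2 * d := by rw [sum_const, nsmul_eq_mul]; ring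
  exact exists_le_of_sum_le hT sum_le

/-- Greedy choice: a vertex of minimum degree is put into the independent set and its neighbours
are discarded. -/
theorem exists_isIndepSet_card_le (T : Finset V)
    (hedges : ∀ A ⊆ T, ((H.induce (A : Set V)).edgeSet.ncard : ℝ) ≤ d * #A) :
    ∃ R ⊆ T, H.IsIndepSet R ∧ (#T : ℝ) ≤ (2 * d + 1) * #R := by
  classical
  induction T using Finset.strongInduction with
  | H T ih =>
    obtain rfl | hT := T.eq_empty_or_nonempty
    · exact ⟨∅, Subset.rfl, by simp, by simp⟩
    obtain ⟨v, hv, hdeg⟩ := exists_card_filter_adj_le hT (hedges T Subset.rfl)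
    set D : Finset V := insert v {w ∈ T | H.Adj v w}
    have hD : D ⊆ T := insert_subset hv (filter_subset _ _)
    have hvD : v ∈ D := mem_insert_self _ _
    obtain ⟨R, hRT, hR, hcard⟩ := ih (T \ D) (sdiff_ssubset hD ⟨v, hvD⟩)
      fun A hA ↦ hedges A (hA.trans sdiff_subset)
    have hvR : v ∉ R := fun h ↦ (mem_sdiff.1 (hRT h)).2 hvD
    have hvw : ∀ w ∈ R, ¬ H.Adj v w := fun w hw hvw ↦ (mem_sdiff.1 (hRT hw)).2 <|
      mem_insert_of_mem <| mem_filter.2 ⟨(mem_sdiff.1 (hRT hw)).1, hvw⟩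
    refine ⟨insert v R, insert_subset hv (hRT.trans sdiff_subset), ?_, ?_⟩
    · have : Std.Symm fun v w ↦ ¬ H.Adj v w := ⟨fun _ _ h h' ↦ h h'.symm⟩
      rw [coe_insert, IsIndepSet, Set.pairwise_insert_of_symm]
      exact ⟨hR, fun w hw _ ↦ hvw w hw⟩
    · have hDcard : (#D : ℝ) ≤ 2 * d + 1 := by
        have : (#D : ℝ) ≤ #{w ∈ T | H.Adj v w} + 1 := mod_cast card_insert_le _ _
        linarith
      have hsplit : (#(T \ D) : ℝ) + #D = #T := mod_cast card_sdiff_add_card_eq_card hD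
      rw [card_insert_of_notMem hvR]
      push_cast
      linarith

end IndependentSets

section Joining

variable {V : Type*} {G : SimpleGraph V} {u v w : V} {I J : Finset V}

/-- Vertices `u` and `v` are joined through `I` if some walk between them has all its vertices
other than `u` and `v` in `I`; such an `I` plays the part of the interior of a subdivided edge. -/
def JoinedThrough (G : SimpleGraph V) (I : Finset V) (u v : V) : Prop :=
  ∃ p : G.Walk u v, ∀ w ∈ p.support, w = u ∨ w = v ∨ w ∈ I

theorem JoinedThrough.symm (h : JoinedThrough G I u v) : JoinedThrough G I v u := by
  obtain ⟨p, hp⟩ := h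
  refine ⟨p.reverse, fun w hw ↦ ?_⟩
  rw [Walk.support_reverse, List.mem_reverse] at hw
  exact or_left_comm.1 (hp w hw)

theorem JoinedThrough.trans [DecidableEq V] (huv : JoinedThrough G I u v)
    (hvw : JoinedThrough G J v w) (hv : v ∈ I) : JoinedThrough G (I ∪ J) u w := by
  obtain ⟨p, hp⟩ := huv
  obtain ⟨q, hq⟩ := hvw
  refine ⟨p.append q, fun z hz ↦ ?_⟩
  rw [Walk.mem_support_append_iff] at hz
  grind

theorem JoinedThrough.exists_isPath (h : JoinedThrough G I u v) :
    ∃ p : G.Walk u v, p.IsPath ∧ p.length ≤ #I + 1 ∧ ∀ w ∈ p.support, w = u ∨ w = v ∨ w ∈ I := by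
  classical
  obtain ⟨p, hp⟩ := h
  have hsupp : ∀ w ∈ p.bypass.support, w = u ∨ w = v ∨ w ∈ I :=
    fun w hw ↦ hp w (p.support_bypass_subset_support hw)
  have hcard : #p.bypass.support.toFinset ≤ #(insert u (insert v I)) :=
    card_le_card fun w hw ↦ by simpa using hsupp w (List.mem_toFinset.1 hw)
  rw [List.toFinset_card_of_nodup p.bypass_isPath.support_nodup, Walk.length_support] at hcard
  have := card_insert_le u (insert v I)
  have := card_insert_le v I
  exact ⟨p.bypass, p.bypass_isPath, by lia, hsupp⟩

variable [DecidableEq V]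

/-- The inner vertices of a walk, those different from both of its ends. -/
def innerVertices (p : G.Walk u v) : Finset V :=
  (p.support.toFinset.erase u).erase v

theorem mem_innerVertices {p : G.Walk u v} :
    w ∈ innerVertices p ↔ w ∈ p.support ∧ w ≠ u ∧ w ≠ v := by
  simp only [innerVertices, mem_erase, List.mem_toFinset]
  tauto

theorem joinedThrough_innerVertices (p : G.Walk u v) : JoinedThrough G (innerVertices p) u v :=
  ⟨p, fun w hw ↦ by rw [mem_innerVertices]; tauto⟩

theorem joinedThrough_of_mem_innerVertices {p : G.Walk u v} (hp : p.IsPath)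
    (hw : w ∈ innerVertices p) : JoinedThrough G (innerVertices p) u w := by
  obtain ⟨hwp, -, hwv⟩ := mem_innerVertices.1 hw
  refine ⟨p.takeUntil w hwp, fun z hz ↦ ?_⟩
  have hzv : z ≠ v := by
    rintro rfl
    exact Walk.endpoint_notMem_support_takeUntil hp hwp hwv.symm hz
  have hzp := p.support_takeUntil_subset_support hwp hz
  rw [mem_innerVertices]
  tauto

theorem card_innerVertices_add_one {p : G.Walk u v} (hp : p.IsPath) (huv : u ≠ v) :
    #(innerVertices p) + 1 = p.length := by
  have hu : u ∈ p.support.toFinset := by simp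
  have hv : v ∈ p.support.toFinset.erase u := by simp [huv.symm]
  rw [innerVertices, card_erase_add_one hv, card_erase_of_mem hu,
    List.toFinset_card_of_nodup hp.support_nodup, Walk.length_support, Nat.add_sub_cancel]

end Joining

section Linkages

variable {V : Type*} {G H : SimpleGraph V} {W : Finset V} {k : ℕ} {I : Sym2 V → Finset V}

/-- Each edge `e` of `H` is realised in `G` through a set `I e` of at most `k` vertices outside
`W`, and these sets are pairwise disjoint. When the vertices of `H` lie in `W`, this exhibits `H`
as a topological minor of `G` with edges subdivided at most `k` times. -/
structure IsLinkage (G : SimpleGraph V) (W : Finset V) (k : ℕ) (H : SimpleGraph V)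
    (I : Sym2 V → Finset V) : Prop where
  joined : ∀ ⦃u v⦄, s(u, v) ∈ H.edgeSet → JoinedThrough G (I s(u, v)) u v
  card_le : ∀ e ∈ H.edgeSet, #(I e) ≤ k
  disjoint : ∀ e ∈ H.edgeSet, Disjoint (I e) W
  pairwiseDisjoint : H.edgeSet.PairwiseDisjoint I

theorem IsLinkage.anti {A : Finset V} (h : IsLinkage G W k H I) (hA : A ⊆ W) :
    IsLinkage G A k H I where
  __ := h
  disjoint e he := (h.disjoint e he).mono_right hA

theorem isLinkage_bot (G : SimpleGraph V) (W : Finset V) (k : ℕ) (I : Sym2 V → Finset V) :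
    IsLinkage G W k ⊥ I where
  joined := by simp
  card_le := by simp
  disjoint := by simp
  pairwiseDisjoint := by simp

theorem IsLinkage.sup_edge [DecidableEq V] {u v : V} {J : Finset V} (h : IsLinkage G W k H I)
    (huv : ¬ H.Adj u v) (hjoined : JoinedThrough G J u v) (hcard : #J ≤ k)
    (hW : Disjoint J W) (hI : ∀ e ∈ H.edgeSet, Disjoint J (I e)) :
    IsLinkage G W k (H ⊔ edge u v) (Function.update I s(u, v) J) := by
  have mem_edgeSet {e : Sym2 V} (he : e ∈ (H ⊔ edge u v).edgeSet) :
      e = s(u, v) ∨ e ∈ H.edgeSet ∧ e ≠ s(u, v) := by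
    rw [edgeSet_sup] at he
    obtain he | he := he
    · exact .inr ⟨he, by rintro rfl; exact huv he⟩
    · exact .inl (edgeSet_edge_subset he)
  constructor
  · intro a b he
    obtain he | ⟨he, hne⟩ := mem_edgeSet he
    · rw [he, Function.update_self]
      obtain ⟨rfl, rfl⟩ | ⟨rfl, rfl⟩ := Sym2.eq_iff.1 he
      exacts [hjoined, hjoined.symm]
    · simpa only [Function.update_of_ne hne] using h.joined he
  · intro e he
    obtain rfl | ⟨he, hne⟩ := mem_edgeSet he
    · simpa using hcard
    · simpa only [Function.update_of_ne hne] using h.card_le e he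
  · intro e he
    obtain rfl | ⟨he, hne⟩ := mem_edgeSet he
    · simpa using hW
    · simpa only [Function.update_of_ne hne] using h.disjoint e he
  · intro e he f hf hef
    rw [Function.onFun]
    obtain rfl | ⟨he, hne⟩ := mem_edgeSet he <;> obtain rfl | ⟨hf, hnf⟩ := mem_edgeSet hf
    · exact absurd rfl hef
    · simpa [Function.update_of_ne hnf] using hI f hf
    · simpa [Function.update_of_ne hne] using (hI e he).symm
    · simpa only [Function.update_of_ne hne, Function.update_of_ne hnf] using
        h.pairwiseDisjoint he hf hef

theorem exists_maximal_isLinkage [Finite V] (G : SimpleGraph V) (S : Finset V) (k : ℕ) :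
    ∃ H I, IsLinkage G S k H I ∧ H.support ⊆ S ∧
      ∀ u ∈ S, ∀ v ∈ S, u ≠ v → ¬ H.Adj u v → ∀ J : Finset V, #J ≤ k → Disjoint J S →
        (∀ e ∈ H.edgeSet, Disjoint J (I e)) → ¬ JoinedThrough G J u v := by
  classical
  obtain ⟨H, ⟨⟨I, hI⟩, hHS⟩, hmax⟩ :=
    {H | (∃ I, IsLinkage G S k H I) ∧ H.support ⊆ S}.toFinite.exists_maximal
      ⟨⊥, ⟨fun _ ↦ ∅, isLinkage_bot ..⟩, by simp⟩
  refine ⟨H, I, hI, hHS, fun u hu v hv huv hadj J hcard hS hIJ hjoined ↦ ?_⟩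
  have hsupp : (H ⊔ edge u v).support ⊆ S := by
    rintro a ⟨b, hab | hab⟩
    · exact hHS ⟨b, hab⟩
    · obtain ⟨⟨rfl, -⟩ | ⟨rfl, -⟩, -⟩ := (edge_adj ..).1 hab
      exacts [hu, hv]
  exact (H.lt_sup_edge _ _ huv hadj).not_ge
    (hmax ⟨⟨_, hI.sup_edge hadj hjoined hcard hS hIJ⟩, hsupp⟩ le_sup_left)

theorem isLinkage_fromEdgeSet_range {ι : Type*} {s t : ι → V} {J : ι → Finset V}
    (hinj : Function.Injective fun i ↦ s(s i, t i))
    (hjoined : ∀ i, JoinedThrough G (J i) (s i) (t i)) (hcard : ∀ i, #(J i) ≤ k)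
    (hW : ∀ i, Disjoint (J i) W) (hJ : Pairwise fun i j ↦ Disjoint (J i) (J j)) :
    IsLinkage G W k (fromEdgeSet (Set.range fun i ↦ s(s i, t i)))
      (Function.extend (fun i ↦ s(s i, t i)) J fun _ ↦ ∅) := by
  have exists_index {e} (he : e ∈ (fromEdgeSet (Set.range fun i ↦ s(s i, t i))).edgeSet) :
      ∃ i, s(s i, t i) = e := by
    rw [edgeSet_fromEdgeSet] at he
    exact he.1
  have extend_eq (i) : Function.extend (fun i ↦ s(s i, t i)) J (fun _ ↦ ∅) s(s i, t i) = J i :=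
    hinj.extend_apply ..
  constructor
  · intro u v he
    obtain ⟨i, hi⟩ := exists_index he
    rw [← hi, extend_eq]
    obtain ⟨rfl, rfl⟩ | ⟨rfl, rfl⟩ := Sym2.eq_iff.1 hi
    exacts [hjoined i, (hjoined i).symm]
  · intro e he
    obtain ⟨i, rfl⟩ := exists_index he
    exact (extend_eq i).symm ▸ hcard i
  · intro e he
    obtain ⟨i, rfl⟩ := exists_index he
    exact (extend_eq i).symm ▸ hW i
  · intro e he f hf hef
    obtain ⟨i, rfl⟩ := exists_index he
    obtain ⟨j, rfl⟩ := exists_index hf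
    rw [Function.onFun, extend_eq, extend_eq]
    exact hJ fun hij ↦ hef (by rw [hij])

theorem ncard_edgeSet_fromEdgeSet_range {ι : Type*} {s t : ι → V}
    (hinj : Function.Injective fun i ↦ s(s i, t i)) (hne : ∀ i, s i ≠ t i) :
    (fromEdgeSet (Set.range fun i ↦ s(s i, t i))).edgeSet.ncard = Nat.card ι := by
  rw [edgeSet_fromEdgeSet, sdiff_eq_left.2, Set.ncard_range_of_injective hinj]
  rw [Set.disjoint_left]
  rintro _ ⟨i, rfl⟩ hdiag
  exact hne i (by simpa using hdiag)

theorem ncard_edgeSet_induce_of_support_subset [Finite V] {s : Set V} (h : H.support ⊆ s) :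
    (H.induce s).edgeSet.ncard = H.edgeSet.ncard := by
  classical
  have := Fintype.ofFinite V
  simpa only [edgeFinset, ← Set.ncard_eq_toFinset_card'] using
    H.card_edgeFinset_induce_of_support_subset h

end Linkages

section MinorDensity

variable {V : Type} {G H : SimpleGraph V} {W : Finset V} {ρ : ℕ} {d : ℝ} {I : Sym2 V → Finset V}

theorem IsLinkage.hasDepthTopMinorDensityGT (h : IsLinkage G W (2 * ρ) H I)
    (hd : d * #W < (H.induce (W : Set V)).edgeSet.ncard) : HasDepthTopMinorDensityGT G ρ d := by
  have hW : 0 < #W := by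
    rw [card_pos, nonempty_iff_ne_empty]
    rintro rfl
    simp [Set.eq_empty_of_isEmpty] at hd
  let f : Fin #W → V := fun i ↦ W.equivFin.symm i
  have f_inj : Function.Injective f := Subtype.val_injective.comp W.equivFin.symm.injective
  have f_mem (i) : f i ∈ W := (W.equivFin.symm i).2
  have exists_path (a b : Fin #W) (_ : a < b) (hab : H.Adj (f a) (f b)) :
      ∃ p : G.Walk (f a) (f b), p.IsPath ∧ p.length ≤ 2 * ρ + 1 ∧
        ∀ w ∈ p.support, w = f a ∨ w = f b ∨ w ∈ I s(f a, f b) := by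
    obtain ⟨p, hp, hlen, hsupp⟩ := (h.joined hab).exists_isPath
    exact ⟨p, hp, hlen.trans (Nat.succ_le_succ (h.card_le _ hab)), hsupp⟩
  choose P hpath hlen hsupp using exists_path
  refine ⟨#W, (H.induce (W : Set V)).comap W.equivFin.symm, hW, ?_, f, P, f_inj, hpath, hlen,
    ?_, ?_⟩
  · rwa [lt_div_iff₀ (mod_cast hW), Set.ncard_congr' (Iso.comap _ _).mapEdgeSet]
  · rintro a b hab hadj w hw hwa hwb c rfl
    have hc : f c ∈ I s(f a, f b) := by
      simpa only [hwa, hwb, false_or] using hsupp a b hab hadj _ hw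
    exact disjoint_left.1 (h.disjoint _ hadj) hc (f_mem c)
  · intro a b hab hadj a' b' hab' hadj' hne w hw hw'
    by_contra! hwab
    have hwI : w ∈ I s(f a, f b) := by
      simpa only [hwab, false_or] using hsupp a b hab hadj w hw
    have hwW : w ∉ W := disjoint_left.1 (h.disjoint _ hadj) hwI
    have hwI' : w ∈ I s(f a', f b') := by
      obtain rfl | rfl | hmem := hsupp a' b' hab' hadj' w hw'
      exacts [absurd (f_mem _) hwW, absurd (f_mem _) hwW, hmem]
    refine disjoint_left.1 (h.pairwiseDisjoint hadj hadj' fun heq ↦ hne ?_) hwI hwI'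
    obtain ⟨ha, hb⟩ | ⟨ha, hb⟩ := Sym2.eq_iff.1 heq
    · exact Prod.ext (f_inj ha) (f_inj hb)
    · exact absurd hab' (f_inj ha ▸ f_inj hb ▸ hab).asymm

theorem IsLinkage.ncard_edgeSet_induce_le (h : IsLinkage G W (2 * ρ) H I)
    (hminor : ¬ HasDepthTopMinorDensityGT G ρ d) {A : Finset V} (hA : A ⊆ W) :
    ((H.induce (A : Set V)).edgeSet.ncard : ℝ) ≤ d * #A :=
  not_lt.1 fun hlt ↦ hminor ((h.anti hA).hasDepthTopMinorDensityGT hlt)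

theorem IsLinkage.ncard_edgeSet_le [Finite V] (h : IsLinkage G W (2 * ρ) H I)
    (hminor : ¬ HasDepthTopMinorDensityGT G ρ d) (hH : H.support ⊆ W) :
    (H.edgeSet.ncard : ℝ) ≤ d * #W :=
  ncard_edgeSet_induce_of_support_subset hH ▸ h.ncard_edgeSet_induce_le hminor Subset.rfl

end MinorDensity

section BackConnectivity

variable {V : Type} {G : SimpleGraph V} {S W : Set V} {u : V} {r m : ℕ}

theorem BConnGE.mono [Finite V] (hSW : S ⊆ W) (h : BConnGE G S u r m) : BConnGE G W u r m := by
  classical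
  have := Fintype.ofFinite V
  obtain ⟨t, P, hpath, hlen, hend, -, hdisj⟩ := h
  have exists_first (i) : ∃ x ∈ W.toFinset.erase u, ∃ hx : x ∈ (P i).support,
      ∀ w ∈ W.toFinset.erase u, w ∈ ((P i).takeUntil x hx).support → w = x :=
    (P i).exists_mem_support_forall_mem_support_imp_eq _
      ⟨t i, by simpa using ⟨(hend i).2, hSW (hend i).1⟩⟩
  choose x hxW hx hfirst using exists_first
  refine ⟨x, fun i ↦ (P i).takeUntil (x i) (hx i), fun i ↦ (hpath i).takeUntil (hx i),
    fun i ↦ ((P i).length_takeUntil_le_length (hx i)).trans (hlen i),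
    fun i ↦ by simpa [and_comm] using hxW i, fun i w hw hwu hwx hwW ↦ ?_,
    fun i j hij w hwi hwj ↦ hdisj i j hij w ((P i).support_takeUntil_subset_support _ hwi)
      ((P j).support_takeUntil_subset_support _ hwj)⟩
  exact hwx (hfirst i w (by simp [hwu, hwW]) hw)

theorem BConnGE.le_card [Finite V] (h : BConnGE G S u r m) : m ≤ Nat.card V := by
  obtain ⟨t, P, -, -, hend, -, hdisj⟩ := h
  have t_inj : Function.Injective t := fun i j hij ↦ by_contra fun hne ↦
    (hend i).2 (hdisj i j hne _ (P i).end_mem_support (by simp [hij]))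
  simpa using Nat.card_le_card_of_injective t t_inj

theorem bddAbove_setOf_bConnGE [Finite V] (G : SimpleGraph V) (S : Set V) (u : V) (r : ℕ) :
    BddAbove {m | BConnGE G S u r m} :=
  ⟨Nat.card V, fun _ h ↦ h.le_card⟩

theorem bConnGE_bconn [Finite V] (G : SimpleGraph V) (S : Set V) (u : V) (r : ℕ) :
    BConnGE G S u r (bconn G S u r) :=
  Nat.sSup_mem (s := {m | BConnGE G S u r m}) ⟨0, finZeroElim, finZeroElim, by simp⟩
    (bddAbove_setOf_bConnGE G S u r)

theorem bconn_mono [Finite V] (hSW : S ⊆ W) : bconn G S u r ≤ bconn G W u r :=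
  le_csSup (bddAbove_setOf_bConnGE G W u r) ((bConnGE_bconn G S u r).mono hSW)

end BackConnectivity

section Unlinked

variable {V : Type} {G : SimpleGraph V} {W R : Finset V} {ρ k : ℕ} {d : ℝ}

/-- No two distinct vertices of `R` are joined through a set of at most `k` vertices outside `W`.
Hence paths with at most `k / 2` inner vertices that leave distinct vertices of `R` cannot meet
outside `W`. -/
def IsUnlinked (G : SimpleGraph V) (W : Finset V) (k : ℕ) (R : Finset V) : Prop :=
  ∀ u ∈ R, ∀ v ∈ R, u ≠ v → ∀ J : Finset V, #J ≤ k → Disjoint J W → ¬ JoinedThrough G J u v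

theorem IsUnlinked.disjoint_innerVertices [DecidableEq V] (hR : IsUnlinked G W (2 * ρ) R)
    {u v x y : V} (hu : u ∈ R) (hv : v ∈ R) (huv : u ≠ v) {p : G.Walk u x} {q : G.Walk v y}
    (hp : p.IsPath) (hq : q.IsPath) (hpcard : #(innerVertices p) ≤ ρ)
    (hqcard : #(innerVertices q) ≤ ρ) (hpW : Disjoint (innerVertices p) W)
    (hqW : Disjoint (innerVertices q) W) : Disjoint (innerVertices p) (innerVertices q) := by
  refine disjoint_left.2 fun w hwp hwq ↦ ?_
  have hjoined : JoinedThrough G (innerVertices p ∪ innerVertices q) u v :=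
    (joinedThrough_of_mem_innerVertices hp hwp).trans
      (joinedThrough_of_mem_innerVertices hq hwq).symm hwp
  have hcard : #(innerVertices p ∪ innerVertices q) ≤ 2 * ρ :=
    (card_union_le _ _).trans (by lia)
  exact hR u hu v hv huv _ hcard (disjoint_union_left.2 ⟨hpW, hqW⟩) hjoined

/-- Paths witnessing the back-connectivities of the vertices of `R` are the edges of a star forest
centred at `R`: paths from different centres cannot meet outside `W`, and none ends in `R`, since
`R` is unlinked. -/
theorem IsUnlinked.sum_bconn_le [Finite V] (hR : IsUnlinked G W (2 * ρ) R) (hRW : R ⊆ W)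
    (hminor : ¬ HasDepthTopMinorDensityGT G ρ d) :
    (∑ v ∈ R, bconn G W v (ρ + 1) : ℝ) ≤ d * #W := by
  classical
  choose t P hpath hlen hend hinner hdisj using fun v : R ↦ bConnGE_bconn G W v (ρ + 1)
  let ι := Σ v : R, Fin (bconn G W v (ρ + 1))
  let J (i : ι) : Finset V := innerVertices (P i.1 i.2)
  have hJcard (i : ι) : #(J i) ≤ ρ := by
    have := card_innerVertices_add_one (hpath i.1 i.2) (hend i.1 i.2).2.symm
    have := hlen i.1 i.2
    lia
  have hJcard' (i : ι) : #(J i) ≤ 2 * ρ := by linarith [hJcard i]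
  have hJW (i : ι) : Disjoint (J i) W := disjoint_left.2 fun w hw ↦ by
    obtain ⟨hwP, hwv, hwt⟩ := mem_innerVertices.1 hw
    exact hinner i.1 i.2 w hwP hwv hwt
  have end_notMem (i : ι) : t i.1 i.2 ∉ R := fun hmem ↦
    hR i.1 i.1.2 _ hmem (hend i.1 i.2).2.symm (J i) (hJcard' i) (hJW i)
      (joinedThrough_innerVertices _)
  have edge_inj : Function.Injective fun i : ι ↦ s((i.1 : V), t i.1 i.2) := by
    rintro ⟨v, i⟩ ⟨w, j⟩ hij
    obtain ⟨hvw, hends⟩ | ⟨hvt, -⟩ := Sym2.eq_iff.1 hij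
    · obtain rfl := Subtype.ext hvw
      by_contra hne
      exact (hend v i).2 <| hdisj v i j (by grind) _ (P v i).end_mem_support (by simp [hends])
    · exact absurd (hvt ▸ v.2) (end_notMem ⟨w, j⟩)
  have hJ : Pairwise fun i j : ι ↦ Disjoint (J i) (J j) := by
    rintro ⟨v, i⟩ ⟨w, j⟩ hij
    obtain rfl | hvw := eq_or_ne v w
    · refine disjoint_left.2 fun x hxi hxj ↦ (mem_innerVertices.1 hxi).2.1 ?_
      exact hdisj v i j (by grind) x (mem_innerVertices.1 hxi).1 (mem_innerVertices.1 hxj).1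
    · exact hR.disjoint_innerVertices v.2 w.2 (Subtype.coe_ne_coe.2 hvw) (hpath v i) (hpath w j)
        (hJcard ⟨v, i⟩) (hJcard ⟨w, j⟩) (hJW ⟨v, i⟩) (hJW ⟨w, j⟩)
  have hlinkage := isLinkage_fromEdgeSet_range edge_inj
    (fun i ↦ joinedThrough_innerVertices (P i.1 i.2)) hJcard' hJW hJ
  have hsupp : (fromEdgeSet (Set.range fun i : ι ↦ s((i.1 : V), t i.1 i.2))).support ⊆ W := by
    rintro a ⟨b, ⟨i, hi⟩, -⟩
    obtain ⟨rfl, -⟩ | ⟨-, rfl⟩ := Sym2.eq_iff.1 hi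
    exacts [hRW i.1.2, (hend i.1 i.2).1]
  have hcard := hlinkage.ncard_edgeSet_le hminor hsupp
  rw [ncard_edgeSet_fromEdgeSet_range edge_inj fun i ↦ (hend i.1 i.2).2.symm] at hcard
  simpa [ι, Nat.card_eq_fintype_card, sum_attach R fun v ↦ (bconn G W v (ρ + 1) : ℝ)] using hcard

/-- `W` consists of `S` and the interiors of a maximal linkage on `S`; vertices of `S` that are
not adjacent in the linkage are then unlinked. -/
theorem exists_isUnlinked [Finite V] (hminor : ¬ HasDepthTopMinorDensityGT G ρ d)
    {S T : Finset V} (hTS : T ⊆ S) :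
    ∃ W R : Finset V, S ⊆ W ∧ R ⊆ T ∧ (#W : ℝ) ≤ (2 * d * ρ + 1) * #S ∧
      (#T : ℝ) ≤ (2 * d + 1) * #R ∧ IsUnlinked G W (2 * ρ) R := by
  classical
  obtain ⟨H, I, hlinkage, hHS, hmax⟩ := exists_maximal_isLinkage G S (2 * ρ)
  obtain ⟨R, hRT, hRindep, hRcard⟩ := exists_isIndepSet_card_le T
    fun A hA ↦ hlinkage.ncard_edgeSet_induce_le hminor (hA.trans hTS)
  let E : Finset (Sym2 V) := H.edgeSet.toFinite.toFinset
  have mem_E {e} : e ∈ E ↔ e ∈ H.edgeSet := Set.Finite.mem_toFinset _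
  refine ⟨S ∪ E.biUnion I, R, subset_union_left, hRT, ?_, hRcard, ?_⟩
  · have hEcard : (#E : ℝ) ≤ d * #S :=
      Set.ncard_eq_toFinset_card H.edgeSet ▸ hlinkage.ncard_edgeSet_le hminor hHS
    have hIcard : #(E.biUnion I) ≤ #E * (2 * ρ) :=
      card_biUnion_le_card_mul _ _ _ fun e he ↦ hlinkage.card_le e (mem_E.1 he)
    calc (#(S ∪ E.biUnion I) : ℝ) ≤ #S + #E * (2 * ρ) :=
          mod_cast (card_union_le _ _).trans (Nat.add_le_add_left hIcard _)
      _ ≤ #S + d * #S * (2 * ρ) := by gcongr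
      _ = (2 * d * ρ + 1) * #S := by ring
  · intro u hu v hv huv J hJ hJW
    obtain ⟨hJS, hJI⟩ := disjoint_union_right.1 hJW
    exact hmax u (hTS (hRT hu)) v (hTS (hRT hv)) huv (hRindep hu hv huv) J hJ hJS
      fun e he ↦ (disjoint_biUnion_right ..).1 hJI e (mem_E.2 he)

theorem two_mul_card_le_of_lt_bconn [Finite V] (hminor : ¬ HasDepthTopMinorDensityGT G ρ d)
    {S T : Finset V} (hTS : T ⊆ S)
    (hT : ∀ v ∈ T, 2 * d * (2 * d + 1) * (2 * d * ρ + 1) < bconn G S v (ρ + 1)) :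
    2 * #T ≤ #S := by
  obtain ⟨W, R, hSW, hRT, hWcard, hTcard, hR⟩ := exists_isUnlinked hminor hTS
  by_contra! hlt
  have hS : (0 : ℝ) < #S := mod_cast (by have := card_le_card hTS; lia : 0 < #S)
  have hlt' : (#S : ℝ) < 2 * #T := mod_cast hlt
  have hd : 0 ≤ d := by
    have := (isLinkage_bot G S (2 * ρ) fun _ ↦ ∅).ncard_edgeSet_le hminor (by simp)
    exact nonneg_of_mul_nonneg_left ((Nat.cast_nonneg _).trans this) hS
  have hRne : R.Nonempty := by
    rw [nonempty_iff_ne_empty]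
    rintro rfl
    rw [card_empty, Nat.cast_zero, mul_zero] at hTcard
    linarith
  have upper : ∑ v ∈ R, (bconn G S v (ρ + 1) : ℝ) ≤
      2 * d * (2 * d + 1) * (2 * d * ρ + 1) * #R := by
    calc ∑ v ∈ R, (bconn G S v (ρ + 1) : ℝ)
        ≤ ∑ v ∈ R, (bconn G W v (ρ + 1) : ℝ) := by
          gcongr with v
          exact bconn_mono (coe_subset.2 hSW)
      _ ≤ d * #W := hR.sum_bconn_le (hRT.trans (hTS.trans hSW)) hminor
      _ ≤ d * ((2 * d * ρ + 1) * #S) := by gcongr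
      _ ≤ d * ((2 * d * ρ + 1) * (2 * ((2 * d + 1) * #R))) := by gcongr; linarith
      _ = 2 * d * (2 * d + 1) * (2 * d * ρ + 1) * #R := by ring
  have lower : 2 * d * (2 * d + 1) * (2 * d * ρ + 1) * #R <
      ∑ v ∈ R, (bconn G S v (ρ + 1) : ℝ) := by
    simpa [mul_comm] using sum_lt_sum_of_nonempty hRne fun v hv ↦ hT v (hRT hv)
  exact lower.not_ge upper

end Unlinked

section BlockOrderings

variable {V : Type*} {P : Set V → V → Prop} {S T : Set V} {ℓ : ℕ} {β : V → ℕ}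

/-- The ordered partition of `S` into nonempty blocks numbered `0, …, ℓ - 1` by `β`, in which every
vertex `v` satisfies `P` relative to the union of the blocks up to its own. With `P S v` a bound on
the back-connectivity of `v` in `S`, this is a bound on the admissibility of the ordering. -/
structure IsBlockOrdering (P : Set V → V → Prop) (S : Set V) (ℓ : ℕ) (β : V → ℕ) : Prop where
  image_eq : β '' S = Set.Iio ℓ
  prop : ∀ v ∈ S, P {u ∈ S | β u ≤ β v} v

theorem IsBlockOrdering.exists_succ (h : IsBlockOrdering P T ℓ β) (hTS : T ⊂ S)
    (hP : ∀ v ∈ S \ T, P S v) : ∃ β', IsBlockOrdering P S (ℓ + 1) β' := by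
  classical
  have β_lt {v} (hv : v ∈ T) : β v < ℓ := h.image_eq.subset ⟨v, hv, rfl⟩
  let β' := T.piecewise β fun _ ↦ ℓ
  have β'_of_mem {v} (hv : v ∈ T) : β' v = β v := Set.piecewise_eq_of_mem _ _ _ hv
  have β'_of_notMem {v} (hv : v ∉ T) : β' v = ℓ := Set.piecewise_eq_of_notMem _ _ _ hv
  refine ⟨β', ?_, fun v hvS ↦ ?_⟩
  · obtain ⟨z, hz⟩ := Set.nonempty_of_ssubset hTS
    rw [← Set.union_sdiff_cancel hTS.subset, Set.image_union,
      Set.image_congr fun v hv ↦ β'_of_mem hv, Set.image_congr fun v hv ↦ β'_of_notMem hv.2,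
      h.image_eq, Set.Nonempty.image_const ⟨z, hz⟩]
    ext i
    simp
  · by_cases hvT : v ∈ T
    · have : {u ∈ S | β' u ≤ β' v} = {u ∈ T | β u ≤ β v} := by
        ext u
        by_cases huT : u ∈ T
        · simp [β'_of_mem, huT, hvT, hTS.subset huT]
        · simp [β'_of_mem, β'_of_notMem, huT, hvT, β_lt]
      exact this ▸ h.prop v hvT
    · have : {u ∈ S | β' u ≤ β' v} = S := by
        refine Set.sep_eq_self_iff_mem_true.2 fun u _ ↦ ?_
        by_cases huT : u ∈ T
        · simpa [β'_of_mem, β'_of_notMem, huT, hvT] using (β_lt huT).le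
        · simp [β'_of_notMem, huT, hvT]
      exact this.symm ▸ hP v ⟨hvS, hvT⟩

theorem exists_isBlockOrdering_of_card_lt
    (hP : ∀ S T : Finset V, T ⊆ S → (∀ v ∈ T, ¬ P S v) → 2 * #T ≤ #S) (k : ℕ) (S : Finset V)
    (hS : #S < 2 ^ k) : ∃ ℓ ≤ k, ∃ β, IsBlockOrdering P S ℓ β := by
  classical
  induction k generalizing S with
  | zero =>
    obtain rfl : S = ∅ := card_eq_zero.1 (by simpa using hS)
    exact ⟨0, le_rfl, fun _ ↦ 0, by simp, by simp⟩
  | succ k ih =>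
    obtain rfl | hne := S.eq_empty_or_nonempty
    · exact ⟨0, Nat.zero_le _, fun _ ↦ 0, by simp, by simp⟩
    set T : Finset V := {v ∈ S | ¬ P S v}
    have hTcard : 2 * #T ≤ #S := hP S T (filter_subset _ _) fun v hv ↦ (mem_filter.1 hv).2
    have hTS : T ⊂ S := (filter_subset _ _).ssubset_of_ne fun h ↦ by
      have := hne.card_pos
      lia
    obtain ⟨ℓ, hℓ, β, hβ⟩ := ih T (by lia)
    obtain ⟨β', hβ'⟩ := hβ.exists_succ (coe_ssubset.2 hTS) fun v hv ↦
      not_not.1 fun h ↦ hv.2 (mem_filter.2 ⟨hv.1, h⟩)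
    exact ⟨ℓ + 1, Nat.succ_le_succ hℓ, β', hβ'⟩

end BlockOrderings

theorem stmt5_general {V : Type} [Fintype V] (G : SimpleGraph V) (ρ : ℕ) (d : ℝ)
    (hminor : ¬ HasDepthTopMinorDensityGT G ρ d) :
    ∃ (ℓ : ℕ) (β : V → ℕ),
      ℓ ≤ Nat.log 2 (Fintype.card V) + 1 ∧
      (∀ v, β v < ℓ) ∧
      (∀ i, i < ℓ → ∃ v, β v = i) ∧
      (∀ v : V, bconn G {u | β u ≤ β v} v (ρ + 1) ≤ 2 * d * (2 * d + 1) * (2 * d * ρ + 1)) := by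
  obtain ⟨ℓ, hℓ, β, hβ, hadm⟩ := exists_isBlockOrdering_of_card_lt
    (P := fun S v ↦ (bconn G S v (ρ + 1) : ℝ) ≤ 2 * d * (2 * d + 1) * (2 * d * ρ + 1))
    (fun S T hTS hT ↦ two_mul_card_le_of_lt_bconn hminor hTS fun v hv ↦ not_le.1 (hT v hv))
    (Nat.log 2 (Fintype.card V) + 1) univ (Nat.lt_pow_succ_log_self one_lt_two _)
  rw [coe_univ, Set.image_univ] at hβ
  exact ⟨ℓ, β, hℓ, fun v ↦ hβ.subset ⟨v, rfl⟩, fun i hi ↦ hβ.superset hi,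
    fun v ↦ by simpa using hadm v (mem_univ v)⟩

theorem admissibility_bound_le {d : ℝ} (hd : 1 ≤ d) (ρ : ℕ) :
    2 * d * (2 * d + 1) * (2 * d * ρ + 1) ≤ 6 * (ρ + 1) ^ 2 * d ^ 3 :=
  calc 2 * d * (2 * d + 1) * (2 * d * ρ + 1)
      ≤ 2 * d * (2 * d + d) * (2 * d * ρ + d) := by gcongr
    _ = 6 * (2 * ρ + 1) * d ^ 3 := by ring
    _ ≤ 6 * (ρ + 1) ^ 2 * d ^ 3 := by gcongr; nlinarith

/-- If every depth-`(r−1)` topological minor of `G` (a graph on `n ≥ 1` vertices) has edge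
density at most `d`, where `r ≥ 2` and `d ≥ 1`, then `G` admits a block vertex ordering
(an ordered partition into `ℓ` nonempty blocks, represented by the block-index function
`β : V → ℕ`) of `r`-admissibility at most `6r²d³` (for every vertex `v`,
`bconn_r(B_1 ∪ … ∪ B_i, v) ≤ 6r²d³` where `B_i` is the block of `v`) and length at most
`⌊log₂ n⌋ + 1`. -/
theorem stmt5 {V : Type} [Fintype V] (G : SimpleGraph V) (n r d : ℕ)
    (hn : n = Fintype.card V) (hpos : 1 ≤ n) (hr : 2 ≤ r) (hd : 1 ≤ d)
    (hminor : ¬ HasDepthTopMinorDensityGT G (r - 1) (d : ℝ)) :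
    ∃ (ℓ : ℕ) (β : V → ℕ),
      ℓ ≤ Nat.log 2 n + 1 ∧
      (∀ v, β v < ℓ) ∧
      (∀ i, i < ℓ → ∃ v, β v = i) ∧
      (∀ v : V, bconn G {u | β u ≤ β v} v r ≤ 6 * r ^ 2 * d ^ 3) := by
  subst hn
  obtain ⟨ρ, rfl⟩ := Nat.exists_eq_add_of_le' (one_le_two.trans hr)
  obtain ⟨ℓ, β, hℓ, hlt, hblock, hadm⟩ := stmt5_general G ρ d hminor
  exact ⟨ℓ, β, hℓ, hlt, hblock, fun v ↦ mod_cast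
    (hadm v).trans (admissibility_bound_le (Nat.one_le_cast.2 hd) ρ)⟩
end
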